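/- For every p ≥ 1 and K̄ ≥ 1 with p ≥ K̄ there is a constant C > 0 (depending only on p and K̄) with the following property. Let K ≤ K̄, let K̄ divide n, let δ, ξ ∈ [0,1), β > 0 and σ ≥ 0. Let W ∈ ℝ^{n×n} be a symmetric matrix partitioned into K̄ × K̄ blocks according to K̄ groups of indices each of size n/K̄, such that every entry of W inside a diagonal block lies in [1/(1+δ), 1+δ], within each diagonal block all same-column entry ratios are at most 1+δ, and every entry outside the diagonal blocks is nonnegative and at most ξ times every entry inside the diagonal blocks. Let Ã be the normalized matrix of W and let F ∈ ℝ^{n×p} be a minimizer of ‖Ã − FFᵀ‖_F² over ℝ^{n×p}. Let Y ∈ ℝ^{n×K} be a label matrix such that each of the K̄ index groups is assigned a class in {1,…,K} and every row of Y in that group equals the corresponding standard basis vector of ℝ^K. Let ΔY ∈ ℝ^{n×K} be a random matrix with independent entries each distributed as N(0, σ²/K), and let Ŵ* = (FᵀF + βI_p)^{−1} Fᵀ (Y + ΔY). Then E[(1/n)‖Y − FŴ*‖_F²] ≤ (β/(β+1))² + C(δ + ξ) + σ² (K̄/n)(1/(β+1))² + C σ² (√δ + ξ)/β. -/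

import Mathlib

open Matrix Finset MeasureTheory ProbabilityTheory

/-- The symmetrically normalized matrix `D^{-1/2} W D^{-1/2}` where
`D = diag(row sums of W)`. -/
noncomputable def normalizedMatrix {n : ℕ} (W : Matrix (Fin n) (Fin n) ℝ) :
    Matrix (Fin n) (Fin n) ℝ :=
  fun i j => W i j / (Real.sqrt (∑ k, W i k) * Real.sqrt (∑ k, W j k))

/-- Squared Frobenius norm of a real matrix. -/
def frobSq {m k : ℕ} (A : Matrix (Fin m) (Fin k) ℝ) : ℝ :=
  ∑ i, ∑ j, (A i j) ^ 2

theorem frobSq_eq_trace {m k : ℕ} (A : Matrix (Fin m) (Fin k) ℝ) :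
    frobSq A = trace (Aᵀ * A) := by
  unfold frobSq
  rw [Finset.sum_comm]
  simp [trace, Matrix.mul_apply, sq]

theorem frobSq_nonneg {m k : ℕ} (A : Matrix (Fin m) (Fin k) ℝ) : 0 ≤ frobSq A :=
  Finset.sum_nonneg fun _ _ => Finset.sum_nonneg fun _ _ => sq_nonneg _

section
open scoped Matrix.Norms.Frobenius

theorem frobSq_eq_norm {m k : ℕ} (A : Matrix (Fin m) (Fin k) ℝ) :
    frobSq A = ‖A‖ ^ 2 := by
  rw [Matrix.frobenius_norm_def, ← Real.sqrt_eq_rpow, Real.sq_sqrt]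
  · simp [frobSq]
  · positivity

/-- Closeness of `B` to a projection gives closeness of `B` to `B^2`. -/
theorem frob_idem_bound {n : ℕ} (B Q : Matrix (Fin n) (Fin n) ℝ) (q e : ℝ) (hq : 1 ≤ q)
    (he : 0 ≤ e) (hQ : Q * Q = Q) (hQn : frobSq Q = q) (hE : frobSq (B - Q) ≤ e ^ 2) :
    frobSq (B - B * B) ≤ ((1 + 2 * q + e) * e) ^ 2 ∧ frobSq B ≤ q + (2 * q + e) * e := by
  rw [frobSq_eq_norm] at *
  have h1 : ‖B - Q‖ ≤ e := abs_le_of_sq_le_sq' hE he |>.2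
  have h2 : ‖Q‖ ≤ q := by nlinarith [norm_nonneg Q]
  have h0 := norm_nonneg (B - Q)
  have h00 := norm_nonneg Q
  constructor
  · have : B - B * B = (B - Q) - Q * (B - Q) - (B - Q) * Q - (B - Q) * (B - Q) := by
      simp only [Matrix.mul_sub, Matrix.sub_mul, hQ]; abel
    rw [this]
    apply pow_le_pow_left₀ (norm_nonneg _)
    calc _ ≤ ‖B - Q‖ + ‖Q‖ * ‖B - Q‖ + ‖B - Q‖ * ‖Q‖ + ‖B - Q‖ * ‖B - Q‖ := by
          refine (norm_sub_le _ _).trans (add_le_add ((norm_sub_le _ _).trans (add_le_add ((norm_sub_le _ _).trans (add_le_add le_rfl ?_)) ?_)) ?_) <;> exact Matrix.frobenius_norm_mul _ _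
      _ ≤ e + q * e + e * q + e * e := by gcongr
      _ = _ := by ring
  · rw [frobSq_eq_norm]
    have h3 : ‖B‖ ≤ ‖Q‖ + ‖B - Q‖ := by
      have := norm_add_le Q (B - Q); simpa using this
    calc ‖B‖ ^ 2 ≤ (‖Q‖ + ‖B - Q‖) ^ 2 := by gcongr
      _ = ‖Q‖ ^ 2 + (2 * ‖Q‖ + ‖B - Q‖) * ‖B - Q‖ := by ring
      _ ≤ q + (2 * q + e) * e := by rw [hQn]; gcongr

theorem quad_lower {n K : ℕ} (E : Matrix (Fin n) (Fin n) ℝ) (Y : Matrix (Fin n) (Fin K) ℝ)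
    (e : ℝ) (he : 0 ≤ e) (hE : frobSq E ≤ e ^ 2) :
    - (e * frobSq Y) ≤ trace (Yᵀ * (E * Y)) := by
  have h1 : ‖E‖ ≤ e := by
    rw [frobSq_eq_norm] at hE
    exact abs_le_of_sq_le_sq' hE he |>.2
  have h2 : (trace (Yᵀ * (E * Y))) ^ 2 ≤ frobSq Y * frobSq (E * Y) := by
    have := Finset.sum_mul_sq_le_sq_mul_sq (Finset.univ : Finset (Fin n × Fin K))
      (fun x => Y x.1 x.2) (fun x => (E * Y) x.1 x.2)
    simp only [Fintype.sum_prod_type] at this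
    rw [Finset.sum_comm] at this
    simpa only [frobSq, trace, Matrix.mul_apply, Matrix.diag_apply, Matrix.transpose_apply] using this
  have h3 : frobSq (E * Y) ≤ e ^ 2 * frobSq Y := by
    rw [frobSq_eq_norm, frobSq_eq_norm, ← mul_pow]
    apply pow_le_pow_left₀ (norm_nonneg _)
    exact (Matrix.frobenius_norm_mul _ _).trans (by gcongr)
  have h4 : (trace (Yᵀ * (E * Y))) ^ 2 ≤ (e * frobSq Y) ^ 2 := by
    calc _ ≤ _ := h2
      _ ≤ frobSq Y * (e ^ 2 * frobSq Y) := by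
        gcongr
        exact frobSq_nonneg _
      _ = _ := by ring
  exact (abs_le_of_sq_le_sq' h4 (mul_nonneg he (frobSq_nonneg _))).1

theorem frobSq_triangle {n : ℕ} (A B Q : Matrix (Fin n) (Fin n) ℝ) (e : ℝ) (he : 0 ≤ e)
    (h1 : frobSq (A - B) ≤ e ^ 2) (h2 : frobSq (A - Q) ≤ e ^ 2) :
    frobSq (B - Q) ≤ (2 * e) ^ 2 := by
  rw [frobSq_eq_norm] at *
  have h1 := abs_le_of_sq_le_sq' h1 he |>.2
  have h2 := abs_le_of_sq_le_sq' h2 he |>.2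
  apply pow_le_pow_left₀ (norm_nonneg _)
  have : B - Q = (A - Q) - (A - B) := by abel
  rw [this]
  linarith [norm_sub_le (A - Q) (A - B)]
end

theorem trace_diag_quad {p K : ℕ} (c : Fin p → ℝ) (Z : Matrix (Fin p) (Fin K) ℝ) :
    trace (Zᵀ * (diagonal c * Z)) = ∑ a, c a * ∑ j, Z a j ^ 2 := by
  have h : trace (Zᵀ * (diagonal c * Z)) = ∑ j, ∑ a, Z a j * (c a * Z a j) := by
    simp only [trace, Matrix.diag_apply]
    refine Finset.sum_congr rfl fun j _ => ?_
    rw [Matrix.mul_apply]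
    refine Finset.sum_congr rfl fun a _ => ?_
    rw [Matrix.diagonal_mul, Matrix.transpose_apply]
  rw [h, Finset.sum_comm]
  refine Finset.sum_congr rfl fun a _ => ?_
  rw [Finset.mul_sum]
  refine Finset.sum_congr rfl fun j _ => ?_
  ring

theorem frobSq_diag {n p : ℕ} (F : Matrix (Fin n) (Fin p) ℝ) (l d : Fin p → ℝ)
    (hF : Fᵀ * F = diagonal l) :
    frobSq (F * diagonal d * Fᵀ) = ∑ a, (l a * d a) ^ 2 := by
  rw [frobSq_eq_trace]
  have : (F * diagonal d * Fᵀ)ᵀ * (F * diagonal d * Fᵀ)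
      = F * (diagonal d * (Fᵀ * F) * diagonal d * Fᵀ) := by
    simp [Matrix.transpose_mul, Matrix.mul_assoc]
  rw [this, trace_mul_comm, Matrix.mul_assoc, hF]
  simp only [diagonal_mul_diagonal, trace_diagonal]
  exact Finset.sum_congr rfl fun a _ => by ring

theorem ridge_resid {n p K : ℕ} (F : Matrix (Fin n) (Fin p) ℝ) (l d : Fin p → ℝ)
    (hF : Fᵀ * F = diagonal l) (Y : Matrix (Fin n) (Fin K) ℝ) :
    frobSq (Y - F * diagonal d * Fᵀ * Y)
      = frobSq Y - ∑ a, (2 * d a - l a * d a ^ 2) * ∑ j, (Fᵀ * Y) a j ^ 2 := by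
  rw [← trace_diag_quad, frobSq_eq_trace, frobSq_eq_trace]
  have h1 : (Y - F * diagonal d * Fᵀ * Y)ᵀ * (Y - F * diagonal d * Fᵀ * Y)
     = Yᵀ * Y - (Fᵀ * Y)ᵀ * (diagonal d * (Fᵀ * Y)) - (Fᵀ * Y)ᵀ * (diagonal d * (Fᵀ * Y))
       + (Fᵀ * Y)ᵀ * (diagonal d * (Fᵀ * F) * diagonal d * (Fᵀ * Y)) := by
    simp only [Matrix.transpose_sub, Matrix.transpose_mul, Matrix.sub_mul, Matrix.mul_sub,
      Matrix.diagonal_transpose, Matrix.transpose_transpose, Matrix.mul_assoc]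
    abel
  have h2 : (diagonal fun a => 2 * d a - l a * d a ^ 2 : Matrix (Fin p) (Fin p) ℝ)
      = diagonal d + diagonal d - diagonal d * diagonal l * diagonal d := by
    rw [diagonal_mul_diagonal, diagonal_mul_diagonal, diagonal_add, diagonal_sub]
    congr 1; ext a; ring
  rw [h1, h2, hF]
  simp only [Matrix.sub_mul, Matrix.add_mul, Matrix.mul_sub, Matrix.mul_add, trace_sub, trace_add]
  ring

theorem exists_diagonalize {n p : ℕ} (F : Matrix (Fin n) (Fin p) ℝ) (β : ℝ) (hβ : 0 < β) :
    ∃ (F' : Matrix (Fin n) (Fin p) ℝ) (l : Fin p → ℝ), (∀ a, 0 ≤ l a) ∧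
      F'ᵀ * F' = diagonal l ∧ F * Fᵀ = F' * F'ᵀ ∧
      F * ((Fᵀ * F + β • (1 : Matrix (Fin p) (Fin p) ℝ))⁻¹ * Fᵀ)
        = F' * diagonal (fun a => 1 / (l a + β)) * F'ᵀ := by
  have hG : (Fᵀ * F).IsHermitian := by
    rw [Matrix.IsHermitian, conjTranspose_eq_transpose_of_trivial]; simp
  obtain ⟨U, l, hU1, hU2, hG2⟩ : ∃ (U : Matrix (Fin p) (Fin p) ℝ) (l : Fin p → ℝ),
      Uᵀ * U = 1 ∧ U * Uᵀ = 1 ∧ Fᵀ * F = U * diagonal l * Uᵀ := by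
    refine ⟨hG.eigenvectorUnitary, hG.eigenvalues, ?_, ?_, ?_⟩
    · have := Unitary.coe_star_mul_self hG.eigenvectorUnitary
      rwa [star_eq_conjTranspose, conjTranspose_eq_transpose_of_trivial] at this
    · have := Unitary.coe_mul_star_self hG.eigenvectorUnitary
      rwa [Unitary.coe_star, star_eq_conjTranspose, conjTranspose_eq_transpose_of_trivial] at this
    · have := hG.spectral_theorem
      rw [Unitary.conjStarAlgAut_apply, star_eq_conjTranspose,
        conjTranspose_eq_transpose_of_trivial] at this
      exact this
  have hd : (F * U)ᵀ * (F * U) = diagonal l := by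
    calc (F * U)ᵀ * (F * U) = Uᵀ * (Fᵀ * F) * U := by
          simp only [Matrix.transpose_mul, Matrix.mul_assoc]
      _ = (Uᵀ * U) * diagonal l * (Uᵀ * U) := by rw [hG2]; simp only [Matrix.mul_assoc]
      _ = _ := by simp [hU1]
  have hl : ∀ a, 0 ≤ l a := by
    intro a
    have := congrFun (congrFun hd a) a
    rw [diagonal_apply_eq] at this
    rw [← this, Matrix.mul_apply]
    exact Finset.sum_nonneg fun i _ => by simpa using mul_self_nonneg _
  refine ⟨F * U, l, hl, hd, ?_, ?_⟩
  · rw [Matrix.transpose_mul, Matrix.mul_assoc, ← Matrix.mul_assoc U, hU2, Matrix.one_mul]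
  · have : (Fᵀ * F + β • (1 : Matrix (Fin p) (Fin p) ℝ))⁻¹
        = U * diagonal (fun a => 1 / (l a + β)) * Uᵀ := by
      apply Matrix.inv_eq_right_inv
      have : Fᵀ * F + β • (1 : Matrix (Fin p) (Fin p) ℝ) = U * diagonal (fun a => l a + β) * Uᵀ := by
        have h : (diagonal fun a => l a + β : Matrix (Fin p) (Fin p) ℝ) = diagonal l + β • 1 := by
          rw [smul_one_eq_diagonal, diagonal_add]
        rw [h, hG2, Matrix.mul_add, Matrix.add_mul]
        simp [hU2]
      rw [this]
      calc _ = U * (diagonal (fun a => l a + β) * (Uᵀ * U) * diagonal (fun a => 1 / (l a + β))) * Uᵀ := by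
            simp only [Matrix.mul_assoc]
        _ = U * 1 * Uᵀ := by
            rw [hU1, Matrix.mul_one, diagonal_mul_diagonal]
            congr 2
            rw [← diagonal_one]
            congr 1; ext a
            have : l a + β ≠ 0 := by linarith [hl a]
            simp [this]
        _ = 1 := by simp [hU2]
    rw [this]
    simp only [Matrix.transpose_mul, Matrix.mul_assoc]

theorem scalar_var (x β : ℝ) (hx : 0 ≤ x) (hβ : 0 < β) :
    (x * (1 / (x + β))) ^ 2 ≤ (1 / (β + 1)) ^ 2 * x ^ 2 + |x * (1 - x)| / β := by
  have hxb : 0 < x + β := by linarith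
  rcases le_or_gt 1 x with h | h
  · have : (x * (1 / (x + β))) ^ 2 ≤ (1 / (β + 1)) ^ 2 * x ^ 2 := by
      rw [mul_pow, mul_comm]
      gcongr ?_ * _
      apply pow_le_pow_left₀ (by positivity)
      apply one_div_le_one_div_of_le <;> linarith
    have : 0 ≤ |x * (1 - x)| / β := by positivity
    linarith
  · rw [abs_of_nonneg (mul_nonneg hx (by linarith))]
    rw [← sub_nonneg]
    have : (1 / (β + 1)) ^ 2 * x ^ 2 + x * (1 - x) / β - (x * (1 / (x + β))) ^ 2
      = x * (1 - x) * ((x + β) ^ 2 * (β + 1) ^ 2 - β * x * (1 + x + 2 * β)) / ((x + β) ^ 2 * (β + 1) ^ 2 * β) := by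
      field_simp
      ring
    rw [this]
    apply div_nonneg _ (by positivity)
    apply mul_nonneg (mul_nonneg hx (by linarith))
    have h1 : 4 * (x * β) ≤ (x + β) ^ 2 := by nlinarith [sq_nonneg (x - β)]
    have h2 : 1 + x + 2 * β ≤ 2 * (β + 1) ^ 2 := by nlinarith
    have h3 : 0 ≤ x * β := by positivity
    nlinarith [mul_le_mul h1 (le_refl ((β + 1) ^ 2)) (by positivity) (by positivity),
      mul_le_mul_of_nonneg_left h2 h3, mul_nonneg h3 (sq_nonneg (β + 1))]

theorem scalar_bias (x β k : ℝ) (hx : 0 ≤ x) (hβ : 0 < β) (hk : 0 ≤ k) (hxk : x ≤ 1 + k) :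
    (1 - (β / (β + 1)) ^ 2) / (1 + k) ≤ 2 * (1 / (x + β)) - x * (1 / (x + β)) ^ 2 := by
  have hxb : 0 < x + β := by linarith
  have e1 : 2 * (1 / (x + β)) - x * (1 / (x + β)) ^ 2 = (x + 2 * β) / (x + β) ^ 2 := by
    field_simp; ring
  have e2 : 1 - (β / (β + 1)) ^ 2 = (1 + 2 * β) / (β + 1) ^ 2 := by
    field_simp; ring
  rw [e1, e2, div_div, div_le_div_iff₀ (by positivity) (by positivity)]
  rcases le_or_gt x 1 with h | h
  · have : (1 + 2 * β) * (x + β) ^ 2 ≤ (x + 2 * β) * (β + 1) ^ 2 := by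
      nlinarith [mul_nonneg (sub_nonneg.2 h) hx, mul_nonneg (mul_nonneg (sub_nonneg.2 h) hx) hβ.le,
        mul_nonneg (sub_nonneg.2 h) hβ.le, mul_nonneg (mul_nonneg (sub_nonneg.2 h) hβ.le) hβ.le]
    have h2 : 0 ≤ (x + 2 * β) * (β + 1) ^ 2 := by positivity
    nlinarith
  · have : (1 + 2 * β) * (x + β) ^ 2 ≤ (x + 2 * β) * ((β + 1) ^ 2 * x) := by
      nlinarith [mul_nonneg (mul_nonneg (sub_nonneg.2 h.le) hβ.le) hβ.le, mul_nonneg (mul_nonneg (mul_nonneg (sub_nonneg.2 h.le) hβ.le) hβ.le) hx]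
    have h2 : 0 ≤ (x + 2 * β) * (β + 1) ^ 2 := by positivity
    nlinarith

/-- Deterministic core. -/
theorem ridge_core {n p K : ℕ} (F : Matrix (Fin n) (Fin p) ℝ) (Q : Matrix (Fin n) (Fin n) ℝ)
    (Y : Matrix (Fin n) (Fin K) ℝ) (q e β : ℝ) (hq : 1 ≤ q) (he : 0 ≤ e) (hβ : 0 < β)
    (hQ : Q * Q = Q) (hQn : frobSq Q = q) (hQY : Q * Y = Y) (hE : frobSq (F * Fᵀ - Q) ≤ e ^ 2) :
    frobSq (F * ((Fᵀ * F + β • (1 : Matrix (Fin p) (Fin p) ℝ))⁻¹ * Fᵀ))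
      ≤ (1 / (β + 1)) ^ 2 * q + ((2 * q + e) * e + p * ((1 + 2 * q + e) * e)) / β ∧
    frobSq (Y - F * ((Fᵀ * F + β • (1 : Matrix (Fin p) (Fin p) ℝ))⁻¹ * Fᵀ) * Y)
      ≤ frobSq Y * ((β / (β + 1)) ^ 2 + 2 * ((1 + 2 * q + e) * e)) := by
  obtain ⟨G, l, hl, hG, hFG, hH⟩ := exists_diagonalize F β hβ
  rw [hH]
  rw [hFG] at hE
  obtain ⟨hB1, hB2⟩ := frob_idem_bound _ Q q e hq he hQ hQn hE
  set k := (1 + 2 * q + e) * e with hk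
  have hk0 : 0 ≤ k := by positivity
  have hek : e ≤ k := by rw [hk]; nlinarith
  have f1 : frobSq (G * Gᵀ) = ∑ a, (l a) ^ 2 := by
    have := frobSq_diag G l (fun _ => 1) hG
    simpa using this
  have f2 : frobSq (G * Gᵀ - G * Gᵀ * (G * Gᵀ)) = ∑ a, (l a * (1 - l a)) ^ 2 := by
    rw [← frobSq_diag G l (fun a => 1 - l a) hG]
    congr 1
    have : (diagonal fun a => 1 - l a : Matrix (Fin p) (Fin p) ℝ) = 1 - Gᵀ * G := by
      rw [hG, ← diagonal_one, diagonal_sub]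
    rw [this, Matrix.mul_sub, Matrix.sub_mul, Matrix.mul_one]
    simp only [Matrix.mul_assoc]
  have hlk : ∀ a, |l a * (1 - l a)| ≤ k := by
    intro a
    apply abs_le_of_sq_le_sq _ hk0
    rw [f2] at hB1
    exact (Finset.single_le_sum (f := fun a => (l a * (1 - l a)) ^ 2)
      (fun _ _ => sq_nonneg _) (Finset.mem_univ a)).trans hB1
  constructor
  · rw [frobSq_diag G l _ hG]
    calc _ ≤ ∑ a, ((1 / (β + 1)) ^ 2 * (l a) ^ 2 + k / β) := by
          refine Finset.sum_le_sum fun a _ => (scalar_var _ _ (hl a) hβ).trans ?_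
          gcongr
          exact hlk a
      _ = (1 / (β + 1)) ^ 2 * frobSq (G * Gᵀ) + p * k / β := by
          rw [f1, Finset.sum_add_distrib, Finset.mul_sum]; simp; ring
      _ ≤ (1 / (β + 1)) ^ 2 * (q + (2 * q + e) * e) + p * k / β := by gcongr
      _ ≤ _ := by
          have : (1 / (β + 1)) ^ 2 ≤ 1 / β := by
            rw [_root_.one_div_pow]
            apply one_div_le_one_div_of_le hβ; nlinarith
          have h2 : 0 ≤ (2 * q + e) * e := by positivity
          have := mul_le_mul_of_nonneg_right this h2
          rw [add_div, mul_add]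
          have h3 : 1 / β * ((2 * q + e) * e) = (2 * q + e) * e / β := by ring
          linarith
  · rw [ridge_resid G l _ hG]
    have hZ : (1 - e) * frobSq Y ≤ ∑ a, ∑ j, (Gᵀ * Y) a j ^ 2 := by
      have h1 : ∑ a, ∑ j, (Gᵀ * Y) a j ^ 2 = trace (Yᵀ * (G * Gᵀ * Y)) := by
        change frobSq (Gᵀ * Y) = _
        rw [frobSq_eq_trace]
        simp only [Matrix.transpose_mul, Matrix.mul_assoc, Matrix.transpose_transpose]
      have h2 := quad_lower (G * Gᵀ - Q) Y e he hE
      rw [Matrix.sub_mul, hQY, Matrix.mul_sub, trace_sub, ← frobSq_eq_trace] at h2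
      rw [h1]; linarith
    have hlk2 : ∀ a, l a ≤ 1 + k := by
      intro a
      have := (abs_le.1 (hlk a)).1
      have h0 := hl a
      by_contra hc
      push Not at hc
      nlinarith
    set ψ := 1 - (β / (β + 1)) ^ 2 with hψ
    have hψ0 : 0 ≤ ψ := by
      have : β / (β + 1) ≤ 1 := by rw [div_le_one (by linarith)]; linarith
      have h' : 0 ≤ β / (β + 1) := by positivity
      rw [hψ]; nlinarith
    have hψ1 : ψ ≤ 1 := by rw [hψ]; nlinarith [sq_nonneg (β / (β + 1))]
    have hs : ψ / (1 + k) * ∑ a, ∑ j, (Gᵀ * Y) a j ^ 2 ≤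
        ∑ a, (2 * (1 / (l a + β)) - l a * (1 / (l a + β)) ^ 2) * ∑ j, (Gᵀ * Y) a j ^ 2 := by
      rw [Finset.mul_sum]
      refine Finset.sum_le_sum fun a _ => ?_
      apply mul_le_mul_of_nonneg_right (scalar_bias _ _ _ (hl a) hβ hk0 (hlk2 a))
      exact Finset.sum_nonneg fun _ _ => sq_nonneg _
    have hY := frobSq_nonneg Y
    have h5 : ψ / (1 + k) * ((1 - e) * frobSq Y) ≤ ψ / (1 + k) * ∑ a, ∑ j, (Gᵀ * Y) a j ^ 2 := by
      gcongr
    have h6 : ψ - 2 * k ≤ ψ / (1 + k) * (1 - e) := by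
      rw [div_mul_eq_mul_div, le_div_iff₀ (by linarith)]
      nlinarith
    have h7 := mul_le_mul_of_nonneg_right h6 hY
    have : (β / (β + 1)) ^ 2 = 1 - ψ := by rw [hψ]; ring
    rw [this]
    nlinarith

theorem group_count {n Kb m : ℕ} (g : Fin n → Fin Kb)
    (hg : ∀ k : Fin Kb, (Finset.univ.filter fun i => g i = k).card = m) (i : Fin n) (c : ℝ) :
    ∑ j, (if g i = g j then c else 0) = m * c := by
  rw [← Finset.sum_filter, Finset.sum_const, ← hg (g i), nsmul_eq_mul]
  simp only [eq_comm]

noncomputable def blockProj {n Kb : ℕ} (m : ℕ) (g : Fin n → Fin Kb) : Matrix (Fin n) (Fin n) ℝ :=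
  Matrix.of fun i j => if g i = g j then 1 / (m : ℝ) else 0

theorem blockProj_idem {n Kb m : ℕ} (hm : 0 < m) (g : Fin n → Fin Kb)
    (hg : ∀ k : Fin Kb, (Finset.univ.filter fun i => g i = k).card = m) :
    blockProj m g * blockProj m g = blockProj m g := by
  have hm' : (m : ℝ) ≠ 0 := by positivity
  ext i j
  rw [Matrix.mul_apply]
  simp only [blockProj, Matrix.of_apply]
  have : ∀ k, (if g i = g k then 1 / (m : ℝ) else 0) * (if g k = g j then 1 / (m : ℝ) else 0)
      = if g i = g k then (if g i = g j then (1 / (m : ℝ)) * (1 / m) else 0) else 0 := by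
    intro k
    by_cases h : g i = g k
    · simp [h]
    · simp [h]
  simp only [this]
  rw [group_count g hg]
  split_ifs
  · field_simp
  · simp

theorem blockProj_frob {n Kb m : ℕ} (hm : 0 < m) (hn : n = Kb * m) (g : Fin n → Fin Kb)
    (hg : ∀ k : Fin Kb, (Finset.univ.filter fun i => g i = k).card = m) :
    frobSq (blockProj m g) = Kb := by
  have hm' : (m : ℝ) ≠ 0 := by positivity
  simp only [frobSq, blockProj, Matrix.of_apply, ite_pow]
  have : ∀ i, ∑ j, (if g i = g j then (1 / (m : ℝ)) ^ 2 else 0 ^ 2) = m * (1 / (m : ℝ)) ^ 2 := by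
    intro i
    rw [← group_count g hg i ((1 / (m : ℝ)) ^ 2)]
    exact Finset.sum_congr rfl fun j _ => by simp
  simp only [this, Finset.sum_const, Finset.card_univ, Fintype.card_fin, nsmul_eq_mul]
  rw [hn]; push_cast; field_simp

theorem blockProj_label {n Kb m K : ℕ} (hm : 0 < m) (g : Fin n → Fin Kb)
    (hg : ∀ k : Fin Kb, (Finset.univ.filter fun i => g i = k).card = m)
    (cls : Fin Kb → Fin K) (Y : Matrix (Fin n) (Fin K) ℝ)
    (hY : ∀ i j, Y i j = if j = cls (g i) then 1 else 0) :
    blockProj m g * Y = Y := by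
  have hm' : (m : ℝ) ≠ 0 := by positivity
  ext i j
  rw [Matrix.mul_apply]
  have : ∀ k, blockProj m g i k * Y k j = if g i = g k then (1 / (m : ℝ)) * Y i j else 0 := by
    intro k
    simp only [blockProj, Matrix.of_apply, hY]
    by_cases h : g i = g k
    · simp [h]
    · simp [h]
  simp only [this]
  rw [group_count g hg]
  field_simp

theorem frobSq_label {n Kb K : ℕ} (g : Fin n → Fin Kb)
    (cls : Fin Kb → Fin K) (Y : Matrix (Fin n) (Fin K) ℝ)
    (hY : ∀ i j, Y i j = if j = cls (g i) then 1 else 0) : frobSq Y = n := by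
  simp [frobSq, hY]

theorem blockProj_factor {n Kb m p : ℕ} (g : Fin n → Fin Kb) (hp : Kb ≤ p) :
    ∃ F' : Matrix (Fin n) (Fin p) ℝ, F' * F'ᵀ = blockProj m g := by
  refine ⟨Matrix.of fun i a => if Fin.castLE hp (g i) = a then Real.sqrt (1 / m) else 0, ?_⟩
  ext i j
  rw [Matrix.mul_apply]
  simp only [blockProj, Matrix.of_apply, Matrix.transpose_apply, ite_mul, zero_mul, mul_ite, mul_zero]
  rw [Finset.sum_ite_eq]
  simp only [Finset.mem_univ, if_true, (Fin.castLE_injective hp).eq_iff]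
  rw [Real.mul_self_sqrt (by positivity)]

theorem normalized_close {n Kb m : ℕ} (hKb : 1 ≤ Kb) (hm : 0 < m) (hn : n = Kb * m)
    (δ ξ : ℝ) (hδ0 : 0 ≤ δ) (hδ1 : δ < 1) (hξ0 : 0 ≤ ξ) (hξ1 : ξ < 1) (g : Fin n → Fin Kb)
    (hg : ∀ k : Fin Kb, (Finset.univ.filter fun i => g i = k).card = m)
    (W : Matrix (Fin n) (Fin n) ℝ)
    (h1 : ∀ i j, g i = g j → 1 / (1 + δ) ≤ W i j ∧ W i j ≤ 1 + δ)
    (h2 : ∀ i j, g i ≠ g j → 0 ≤ W i j ∧ ∀ s t, g s = g t → W i j ≤ ξ * W s t) :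
    frobSq (normalizedMatrix W - blockProj m g) ≤ (4 * (Kb : ℝ) ^ 2 * (δ + ξ)) ^ 2 := by
  have hm' : 0 < (m : ℝ) := by positivity
  have hK' : (1 : ℝ) ≤ Kb := by exact_mod_cast hKb
  have hoff : ∀ i j, g i ≠ g j → 0 ≤ W i j ∧ W i j ≤ ξ * (1 + δ) := by
    intro i j hij
    refine ⟨(h2 i j hij).1, ((h2 i j hij).2 i i rfl).trans ?_⟩
    gcongr
    exact (h1 i i rfl).2
  have hδp : 0 < 1 + δ := by linarith
  have hDlow : ∀ i, m / (1 + δ) ≤ ∑ k, W i k := by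
    intro i
    rw [show (m : ℝ) / (1 + δ) = m * (1 / (1 + δ)) by ring, ← group_count g hg i]
    refine Finset.sum_le_sum fun j _ => ?_
    split_ifs with h
    · exact (h1 i j h).1
    · exact (hoff i j h).1
  have hDup : ∀ i, ∑ k, W i k ≤ m * ((1 + δ) * (1 + Kb * ξ)) := by
    intro i
    calc ∑ k, W i k ≤ ∑ k, ((if g i = g k then (1 + δ) else 0) + ξ * (1 + δ)) := by
          refine Finset.sum_le_sum fun j _ => ?_
          split_ifs with h
          · have := (h1 i j h).2; nlinarith
          · have := (hoff i j h).2; linarith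
      _ = m * (1 + δ) + n * (ξ * (1 + δ)) := by
          rw [Finset.sum_add_distrib, group_count g hg]; simp
      _ = _ := by rw [hn]; push_cast; ring
  have hSlow : ∀ i j, m / (1 + δ) ≤ Real.sqrt (∑ k, W i k) * Real.sqrt (∑ k, W j k) := by
    intro i j
    have h0 : 0 ≤ (m : ℝ) / (1 + δ) := by positivity
    rw [← Real.mul_self_sqrt h0]
    exact mul_le_mul (Real.sqrt_le_sqrt (hDlow i)) (Real.sqrt_le_sqrt (hDlow j))
      (Real.sqrt_nonneg _) (Real.sqrt_nonneg _)
  have hSup : ∀ i j, Real.sqrt (∑ k, W i k) * Real.sqrt (∑ k, W j k) ≤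
      m * ((1 + δ) * (1 + Kb * ξ)) := by
    intro i j
    have h0 : 0 ≤ (m : ℝ) * ((1 + δ) * (1 + Kb * ξ)) := by positivity
    rw [← Real.mul_self_sqrt h0]
    exact mul_le_mul (Real.sqrt_le_sqrt (hDup i)) (Real.sqrt_le_sqrt (hDup j))
      (Real.sqrt_nonneg _) (Real.sqrt_nonneg _)
  have hKξ : 0 ≤ (Kb : ℝ) * ξ := by positivity
  have hent : ∀ i j, |(normalizedMatrix W - blockProj m g) i j| ≤ 4 * Kb * (δ + ξ) / m := by
    intro i j
    have hs1 := hSlow i j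
    have hs2 := hSup i j
    simp only [Matrix.sub_apply, normalizedMatrix, blockProj, Matrix.of_apply]
    set S := Real.sqrt (∑ k, W i k) * Real.sqrt (∑ k, W j k)
    have hS0 : 0 < S := lt_of_lt_of_le (by positivity) hs1
    have hKδ : δ ≤ Kb * δ := by nlinarith
    have hKξ2 : ξ ≤ Kb * ξ := by nlinarith
    have hmS : (m : ℝ) ≤ S * (1 + δ) := by rwa [div_le_iff₀ hδp] at hs1
    split_ifs with h
    · obtain ⟨hw1, hw2⟩ := h1 i j h
      have hw1' : 1 ≤ W i j * (1 + δ) := by rwa [div_le_iff₀ hδp] at hw1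
      have e : W i j / S - 1 / m = (m * W i j / S - 1) / m := by field_simp
      rw [e, abs_div, abs_of_pos hm']
      gcongr
      rw [abs_le]
      have hw0 : 0 ≤ W i j := le_trans (by positivity) hw1
      have hu : m * W i j / S ≤ (1 + δ) ^ 2 := by
        rw [div_le_iff₀ hS0]
        calc m * W i j ≤ (S * (1 + δ)) * (1 + δ) := by gcongr
          _ = _ := by ring
      have hlo : 1 / ((1 + δ) ^ 2 * (1 + Kb * ξ)) ≤ m * W i j / S := by
        rw [div_le_div_iff₀ (by positivity) hS0]
        calc 1 * S ≤ (W i j * (1 + δ)) * (m * ((1 + δ) * (1 + Kb * ξ))) := by gcongr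
          _ = _ := by ring
      have hlo2 : 1 - 4 * Kb * (δ + ξ) ≤ 1 / ((1 + δ) ^ 2 * (1 + Kb * ξ)) := by
        have ha : (1 + δ) ^ 2 * (1 + Kb * ξ) ≤ 1 + 4 * Kb * (δ + ξ) := by
          have hb : (1 + δ) ^ 2 ≤ 1 + 3 * δ := by nlinarith
          have hc := mul_le_mul_of_nonneg_right hb (by linarith : 0 ≤ 1 + (Kb : ℝ) * ξ)
          have hd := mul_le_mul_of_nonneg_right hδ1.le hKξ
          nlinarith
        have ha' : 0 ≤ 4 * Kb * (δ + ξ) := by positivity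
        calc 1 - 4 * Kb * (δ + ξ) ≤ 1 / (1 + 4 * Kb * (δ + ξ)) := by
              rw [le_div_iff₀ (by linarith)]; nlinarith
          _ ≤ _ := one_div_le_one_div_of_le (by positivity) ha
      constructor
      · linarith
      · nlinarith
    · obtain ⟨hw1, hw2⟩ := hoff i j h
      rw [sub_zero, abs_of_nonneg (by positivity), div_le_div_iff₀ hS0 hm']
      calc W i j * m ≤ (ξ * (1 + δ)) * (S * (1 + δ)) := by gcongr
        _ = ξ * (1 + δ) ^ 2 * S := by ring
        _ ≤ _ := by
          apply mul_le_mul_of_nonneg_right _ hS0.le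
          have : (1 + δ) ^ 2 ≤ 4 := by nlinarith
          nlinarith
  calc frobSq (normalizedMatrix W - blockProj m g)
      ≤ ∑ i : Fin n, ∑ j : Fin n, (4 * Kb * (δ + ξ) / m) ^ 2 := by
        refine Finset.sum_le_sum fun i _ => Finset.sum_le_sum fun j _ => ?_
        rw [← sq_abs]
        exact pow_le_pow_left₀ (abs_nonneg _) (hent i j) 2
    _ = _ := by
        simp only [Finset.sum_const, Finset.card_univ, Fintype.card_fin, nsmul_eq_mul]
        rw [hn]; push_cast; field_simp; 

theorem noise_expect {n K : ℕ} {Ω : Type} [MeasurableSpace Ω] (P : Measure Ω)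
    [IsProbabilityMeasure P] (v : NNReal) (Z : Ω → Matrix (Fin n) (Fin K) ℝ)
    (hm : ∀ (i : Fin n) (j : Fin K), Measurable (fun ω => Z ω i j))
    (hlaw : ∀ (i : Fin n) (j : Fin K), Measure.map (fun ω => Z ω i j) P = gaussianReal 0 v)
    (hind : iIndepFun (m := fun _ : Fin n × Fin K => (inferInstance : MeasurableSpace ℝ))
          (fun ik ω => Z ω ik.1 ik.2) P)
    (M : Matrix (Fin n) (Fin K) ℝ) (H : Matrix (Fin n) (Fin n) ℝ) :
    ∫ ω, frobSq (M - H * Z ω) ∂P = frobSq M + K * v * frobSq H := by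
  have hL : ∀ i j, MemLp (fun ω => Z ω i j) 2 P := by
    intro i j
    have : MemLp id 2 (Measure.map (fun ω => Z ω i j) P) := by
      rw [hlaw]; exact memLp_id_gaussianReal 2
    exact (memLp_map_measure_iff this.1 (hm i j).aemeasurable).1 this
  have hI : ∀ i j, Integrable (fun ω => Z ω i j) P := fun i j => (hL i j).integrable (by norm_num)
  have hmean : ∀ i j, ∫ ω, Z ω i j ∂P = 0 := by
    intro i j
    have := integral_map (μ := P) (hm i j).aemeasurable (f := fun x : ℝ => x)
      measurable_id.aestronglyMeasurable
    rw [← this, hlaw, integral_id_gaussianReal]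
  have hvar : ∀ i j, ∫ ω, Z ω i j * Z ω i j ∂P = v := by
    intro i j
    have h1 := variance_of_integral_eq_zero (hm i j).aemeasurable (hmean i j)
    have h2 : variance (fun ω => Z ω i j) P = v := by
      rw [← variance_id_map (hm i j).aemeasurable, hlaw, variance_id_gaussianReal]
    rw [← h2, h1]
    simp only [sq]
  have hprodI : ∀ i k j, Integrable (fun ω => Z ω i j * Z ω k j) P := fun i k j =>
    (hL i j).integrable_mul (hL k j)
  have hcov : ∀ i k j, ∫ ω, Z ω i j * Z ω k j ∂P = if i = k then (v : ℝ) else 0 := by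
    intro i k j
    split_ifs with h
    · subst h; exact hvar i j
    · have := (hind.indepFun (i := (i, j)) (j := (k, j)) (by simpa using h))
      rw [this.integral_fun_mul_eq_mul_integral (hm i j).aestronglyMeasurable
        (hm k j).aestronglyMeasurable, hmean, zero_mul]
  have hexp : ∀ ω, frobSq (M - H * Z ω) = ∑ i, ∑ j, (M i j ^ 2 - ∑ k, (2 * M i j * H i k) * Z ω k j
      + ∑ k, ∑ l, (H i k * H i l) * (Z ω k j * Z ω l j)) := by
    intro ω
    unfold frobSq
    refine Finset.sum_congr rfl fun i _ => Finset.sum_congr rfl fun j _ => ?_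
    rw [Matrix.sub_apply, Matrix.mul_apply, sub_sq, Finset.mul_sum, sq (∑ k, _), Finset.sum_mul_sum]
    congr 1
    · congr 1
      exact Finset.sum_congr rfl fun k _ => by ring
    · exact Finset.sum_congr rfl fun k _ => Finset.sum_congr rfl fun l _ => by ring
  simp only [hexp]
  have i1 : ∀ i j, Integrable (fun ω => ∑ k, (2 * M i j * H i k) * Z ω k j) P := fun i j =>
    integrable_finsetSum _ fun k _ => (hI k j).const_mul _
  have i2 : ∀ i j, Integrable (fun ω => ∑ k, ∑ l, (H i k * H i l) * (Z ω k j * Z ω l j)) P :=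
    fun i j => integrable_finsetSum _ fun k _ => integrable_finsetSum _ fun l _ =>
      (hprodI k l j).const_mul _
  have i0 : ∀ i j, Integrable (fun ω => M i j ^ 2 - ∑ k, (2 * M i j * H i k) * Z ω k j) P :=
    fun i j => (integrable_const _).sub (i1 i j)
  have key : ∀ i j, ∫ ω, (M i j ^ 2 - ∑ k, (2 * M i j * H i k) * Z ω k j
      + ∑ k, ∑ l, (H i k * H i l) * (Z ω k j * Z ω l j)) ∂P = M i j ^ 2 + v * ∑ k, H i k ^ 2 := by
    intro i j
    rw [integral_add (i0 i j) (i2 i j), integral_sub (integrable_const _) (i1 i j),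
      integral_finsetSum _ fun k _ => (hI k j).const_mul _,
      integral_finsetSum _ fun k _ => integrable_finsetSum _ fun l _ => (hprodI k l j).const_mul _]
    have : ∀ k, ∫ ω, ∑ l, (H i k * H i l) * (Z ω k j * Z ω l j) ∂P = v * H i k ^ 2 := by
      intro k
      rw [integral_finsetSum _ fun l _ => (hprodI k l j).const_mul _]
      simp only [integral_const_mul, hcov, mul_ite, mul_zero, Finset.sum_ite_eq, Finset.mem_univ,
        if_true]
      ring
    simp only [this, integral_const_mul, hmean, mul_zero, Finset.sum_const_zero]
    rw [Finset.mul_sum]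
    simp
  have i3 : ∀ i j, Integrable (fun ω => M i j ^ 2 - ∑ k, (2 * M i j * H i k) * Z ω k j
      + ∑ k, ∑ l, (H i k * H i l) * (Z ω k j * Z ω l j)) P := fun i j => (i0 i j).add (i2 i j)
  rw [integral_finsetSum _ fun i _ => integrable_finsetSum _ fun j _ => i3 i j]
  have : ∀ i, ∫ ω, ∑ j, (M i j ^ 2 - ∑ k, (2 * M i j * H i k) * Z ω k j
      + ∑ k, ∑ l, (H i k * H i l) * (Z ω k j * Z ω l j)) ∂P
      = ∑ j, M i j ^ 2 + K * v * ∑ k, H i k ^ 2 := by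
    intro i
    rw [integral_finsetSum _ fun j _ => i3 i j]
    simp only [key, Finset.sum_add_distrib, Finset.sum_const, Finset.card_univ, Fintype.card_fin,
      nsmul_eq_mul]
    ring
  simp only [this]
  rw [Finset.sum_add_distrib, ← Finset.mul_sum]
  rfl

set_option maxHeartbeats 1000000 in
/-- paper's Theorem 4.2, Gaussian label noise.  For every
`p ≥ 1` and `K̄ ≥ 1` with `p ≥ K̄` there is `C > 0` such that: for balanced compact and
distinguishable sub-classes (symmetric `W` with in-block entries in `[1/(1+δ), 1+δ]`,
in-block same-column entry ratios at most `1+δ`, off-block entries nonnegative and at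
most `ξ` times every in-block entry), for any minimizer `F ∈ ℝ^{n×p}` of
`‖Ã − FFᵀ‖_F²` (where `Ã` is the normalized matrix of `W`), for one-hot clean labels `Y`
constant on sub-classes, and a random label perturbation `ΔY` with independent entries
distributed as `N(0, σ²/K)`, the ridge solution `Ŵ* = (FᵀF + βI)⁻¹Fᵀ(Y + ΔY)` has
expected training error w.r.t. the ground-truth labels at most
`(β/(β+1))² + C(δ+ξ) + σ²(K̄/n)(1/(β+1))² + Cσ²(√δ + ξ)/β`. -/
theorem gaussian_noise_training_error_bound
    (p Kb : ℕ) (hp : 1 ≤ p) (hKb : 1 ≤ Kb) (hpKb : Kb ≤ p) :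
    ∃ C : ℝ, 0 < C ∧
      ∀ (n K : ℕ), K ≤ Kb → Kb ∣ n →
      ∀ (δ ξ β : ℝ), 0 ≤ δ → δ < 1 → 0 ≤ ξ → ξ < 1 → 0 < β →
      ∀ (σ : NNReal),
      ∀ (g : Fin n → Fin Kb),
        (∀ k : Fin Kb, (Finset.univ.filter fun i => g i = k).card = n / Kb) →
      ∀ (W : Matrix (Fin n) (Fin n) ℝ), W.IsSymm →
        (∀ i j, g i = g j → 1 / (1 + δ) ≤ W i j ∧ W i j ≤ 1 + δ) →
        (∀ s t j, g s = g j → g t = g j → W s j / W t j ≤ 1 + δ) →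
        (∀ i j, g i ≠ g j → 0 ≤ W i j ∧ ∀ s t, g s = g t → W i j ≤ ξ * W s t) →
      ∀ (F : Matrix (Fin n) (Fin p) ℝ),
        (∀ F' : Matrix (Fin n) (Fin p) ℝ,
          frobSq (normalizedMatrix W - F * Fᵀ) ≤ frobSq (normalizedMatrix W - F' * F'ᵀ)) →
      ∀ (cls : Fin Kb → Fin K),
      ∀ (Y : Matrix (Fin n) (Fin K) ℝ),
        (∀ i j, Y i j = if j = cls (g i) then 1 else 0) →
      ∀ (Ω : Type) (mΩ : MeasurableSpace Ω) (P : Measure Ω), IsProbabilityMeasure P →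
      ∀ (ΔY : Ω → Matrix (Fin n) (Fin K) ℝ),
        (∀ (i : Fin n) (j : Fin K), Measurable (fun ω => ΔY ω i j)) →
        (∀ (i : Fin n) (j : Fin K),
          Measure.map (fun ω => ΔY ω i j) P = gaussianReal 0 (σ ^ 2 / (K : NNReal))) →
        iIndepFun (m := fun _ : Fin n × Fin K => (inferInstance : MeasurableSpace ℝ))
          (fun ik ω => ΔY ω ik.1 ik.2) P →
        ∫ ω, (1 / (n : ℝ)) * frobSq (Y - F *
            ((Fᵀ * F + β • (1 : Matrix (Fin p) (Fin p) ℝ))⁻¹ * Fᵀ * (Y + ΔY ω))) ∂P ≤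
          (β / (β + 1)) ^ 2 + C * (δ + ξ) +
            (σ : ℝ) ^ 2 * ((Kb : ℝ) / n) * (1 / (β + 1)) ^ 2 +
            C * (σ : ℝ) ^ 2 * (Real.sqrt δ + ξ) / β := by
  set q : ℝ := (Kb : ℝ) with hqdef
  have hq : 1 ≤ q := by rw [hqdef]; exact_mod_cast hKb
  set A : ℝ := 1 + 2 * q + 16 * q ^ 2 with hA
  have hA0 : 0 < A := by positivity
  refine ⟨8 * q ^ 2 * ((p + 3) * A), by positivity, ?_⟩
  intro n K hK hdvd δ ξ β hδ0 hδ1 hξ0 hξ1 hβ σ g hg W hWs hW1 hW2 hW3 F hF cls Y hY Ω mΩ P hP ΔY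
    hmeas hlaw hind
  rcases Nat.eq_zero_or_pos n with hn0 | hn0
  · subst hn0
    simp only [Nat.cast_zero, div_zero, zero_mul, integral_zero]
    positivity
  obtain ⟨m, hnm⟩ := hdvd
  have hm : 0 < m := by
    rcases Nat.eq_zero_or_pos m with h | h
    · subst h; simp at hnm; omega
    · exact h
  have hdiv : n / Kb = m := by rw [hnm]; exact Nat.mul_div_cancel_left m (by omega)
  rw [hdiv] at hg
  have hK0 : 0 < K := (cls ⟨0, by omega⟩).pos
  have hclose := normalized_close hKb hm hnm δ ξ hδ0 hδ1 hξ0 hξ1 g hg W hW1 hW3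
  obtain ⟨F', hF'⟩ := blockProj_factor (m := m) g hpKb
  have hFc := hF F'
  rw [hF'] at hFc
  replace hFc := hFc.trans hclose
  have hE := frobSq_triangle _ _ _ _ (by positivity) hFc hclose
  set e : ℝ := 2 * (4 * (Kb : ℝ) ^ 2 * (δ + ξ)) with he
  have he0 : 0 ≤ e := by positivity
  have he1 : e ≤ 16 * q ^ 2 := by
    rw [he, ← hqdef]; nlinarith [sq_nonneg q]
  obtain ⟨hvar, hbias⟩ := ridge_core F (blockProj m g) Y q e β hq he0 hβ
    (blockProj_idem hm g hg) (blockProj_frob hm hnm g hg) (blockProj_label hm g hg cls Y hY) hE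
  rw [frobSq_label g cls Y hY] at hbias
  set H := F * ((Fᵀ * F + β • (1 : Matrix (Fin p) (Fin p) ℝ))⁻¹ * Fᵀ) with hH
  have hrew : ∀ ω, Y - F * ((Fᵀ * F + β • (1 : Matrix (Fin p) (Fin p) ℝ))⁻¹ * Fᵀ * (Y + ΔY ω))
      = (Y - H * Y) - H * ΔY ω := by
    intro ω
    rw [hH, Matrix.mul_add, Matrix.mul_add]
    simp only [Matrix.mul_assoc]
    abel
  simp only [hrew]
  rw [integral_const_mul, noise_expect P _ ΔY hmeas hlaw hind]
  have hKv : (K : ℝ) * ((σ ^ 2 / (K : NNReal) : NNReal) : ℝ) = (σ : ℝ) ^ 2 := by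
    have : (K : ℝ) ≠ 0 := by positivity
    push_cast
    field_simp
  rw [hKv]
  have hn' : (1 : ℝ) ≤ n := by exact_mod_cast hn0
  have hnp : (0 : ℝ) < n := by linarith
  have hkA : (1 + 2 * q + e) * e ≤ A * e := by
    apply mul_le_mul_of_nonneg_right _ he0; rw [hA]; linarith
  have hkA2 : (2 * q + e) * e ≤ A * e := by
    apply mul_le_mul_of_nonneg_right _ he0; rw [hA]; linarith
  have hAe : 0 ≤ A * e := by positivity
  have hp0 : (0 : ℝ) ≤ p := by positivity
  have heC : 8 * q ^ 2 * ((p + 3) * A) * (δ + ξ) = (p + 3) * (A * e) := by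
    rw [he]; ring
  have hsq : δ ≤ Real.sqrt δ := by
    apply Real.le_sqrt_of_sq_le; nlinarith
  have hb2 : 1 / (n : ℝ) * frobSq (Y - H * Y) ≤
      (β / (β + 1)) ^ 2 + 8 * q ^ 2 * ((p + 3) * A) * (δ + ξ) := by
    calc 1 / (n : ℝ) * frobSq (Y - H * Y)
        ≤ 1 / (n : ℝ) * (n * ((β / (β + 1)) ^ 2 + 2 * ((1 + 2 * q + e) * e))) := by gcongr
      _ = (β / (β + 1)) ^ 2 + 2 * ((1 + 2 * q + e) * e) := by field_simp
      _ ≤ _ := by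
          rw [heC, add_mul]
          have := mul_nonneg hp0 hAe
          linarith
  have hv2 : frobSq H ≤ (1 / (β + 1)) ^ 2 * q +
      8 * q ^ 2 * ((p + 3) * A) * (Real.sqrt δ + ξ) / β := by
    refine hvar.trans ?_
    gcongr
    calc (2 * q + e) * e + p * ((1 + 2 * q + e) * e) ≤ A * e + p * (A * e) := by gcongr
      _ ≤ (p + 3) * (A * e) := by
          rw [add_mul]
          linarith
      _ = 8 * q ^ 2 * ((p + 3) * A) * (δ + ξ) := heC.symm
      _ ≤ _ := by gcongr
  have hR : 0 ≤ 8 * q ^ 2 * ((p + 3) * A) * (Real.sqrt δ + ξ) / β := by positivity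
  have hv3 : 1 / (n : ℝ) * ((σ : ℝ) ^ 2 * frobSq H) ≤
      (σ : ℝ) ^ 2 * (q / n) * (1 / (β + 1)) ^ 2 +
        8 * q ^ 2 * ((p + 3) * A) * (σ : ℝ) ^ 2 * (Real.sqrt δ + ξ) / β := by
    set R := 8 * q ^ 2 * ((p + 3) * A) * (Real.sqrt δ + ξ) / β with hRdef
    calc 1 / (n : ℝ) * ((σ : ℝ) ^ 2 * frobSq H)
        ≤ 1 / (n : ℝ) * ((σ : ℝ) ^ 2 * ((1 / (β + 1)) ^ 2 * q + R)) := by gcongr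
      _ = (σ : ℝ) ^ 2 * (q / n) * (1 / (β + 1)) ^ 2 + 1 / (n : ℝ) * ((σ : ℝ) ^ 2 * R) := by ring
      _ ≤ (σ : ℝ) ^ 2 * (q / n) * (1 / (β + 1)) ^ 2 + 1 * ((σ : ℝ) ^ 2 * R) := by
          gcongr
          rw [div_le_one hnp]; exact hn'
      _ = _ := by rw [hRdef]; ring
  rw [mul_add]
  linarith
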